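/- Let q be a complex number with 0 < |q| < 1, fix a square root q^{1/2} of q, and let a be a complex number with |a| < 1. Then ∫₀^π h(cos θ; q^{1/2}, -q^{1/2}) / h(cos θ; a) dθ = π (q^{1/2}; q)_∞ (-q^{1/2}; q)_∞ / ((q; q)_∞ (a; q)_∞ (-a; q)_∞). -/

import Mathlib

open Complex MeasureTheory

/-- The q-shifted factorial `(x; q)_∞ = ∏_{k=0}^∞ (1 - x q^k)`. -/
noncomputable def qp (q x : ℂ) : ℂ := ∏' k : ℕ, (1 - x * q ^ k)

/-- The finite q-shifted factorial `(x; q)_n = ∏_{k=0}^{n-1} (1 - x q^k)`. -/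
noncomputable def qpn (q x : ℂ) (n : ℕ) : ℂ := ∏ k ∈ Finset.range n, (1 - x * q ^ k)

/-- For `x = cos θ`, `h(x; λ) = (λ e^{iθ}; q)_∞ (λ e^{-iθ}; q)_∞`. -/
noncomputable def hh (q : ℂ) (θ : ℝ) (l : ℂ) : ℂ :=
  qp q (l * Complex.exp ((θ : ℂ) * Complex.I)) *
    qp q (l * Complex.exp (-((θ : ℂ) * Complex.I)))

/-!
With `z = e^{iθ}` the integrand becomes `K a z = W z / ((a z; q)_∞ (a / z; q)_∞)`, where
`W z = (q z², q / z²; q²)_∞` is a theta function with `W (q / z) = -(z² / q) W z`. Hence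
`z (1 - a / z) K a z` changes sign under `z ↦ q / z`, so its average vanishes on the circle of
radius `√|q|` and, by Cauchy's theorem, on the unit circle. For the unit-circle average `I a` of
`K a` this yields `I (q a) = (1 - a²) I a`, so that `I a * (a²; q²)_∞` is invariant under `a ↦ q a`
and therefore constant in `a`. The constant is found at `a = q`: there `z / (1 - z) * K q z` also
changes sign under `z ↦ q / z`, and moving its average from the unit circle to radius `√|q|` leaves
only the contribution of the pole at `z = 1`, which gives `I q = K q 1`.
-/

open Metric Set Filter Topology Real Function

section CircleAverage

variable {E : Type*} [NormedAddCommGroup E]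

theorem circleAverage_comp_mul [NormedSpace ℝ E] (f : ℂ → E) (w : ℂ) (R : ℝ) :
    circleAverage (fun z ↦ f (w * z)) 0 R = circleAverage f 0 (‖w‖ * R) := by
  rw [circleAverage_eq_integral_add (f := f) w.arg, circleAverage_def]
  congr! 4 with θ
  calc w * circleMap 0 R θ
      = ‖w‖ * cexp (w.arg * I) * (R * cexp (θ * I)) := by
        rw [norm_mul_exp_arg_mul_I, circleMap_zero]
    _ = circleMap 0 (‖w‖ * R) (θ + w.arg) := by
        rw [circleMap_zero, ofReal_mul, ofReal_add, add_mul, Complex.exp_add]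
        ring

theorem circleAverage_comp_div [NormedSpace ℝ E] (f : ℂ → E) (c : ℂ) (R : ℝ) :
    circleAverage (fun z ↦ f (c / z)) 0 R = circleAverage f 0 (‖c‖ / R) :=
  calc circleAverage (fun z ↦ f (c / z)) 0 R
      = circleAverage (fun z ↦ f (c / R * z⁻¹)) 0 1 := by
        rw [circleAverage_eq_circleAverage_zero_one]
        simp only [add_zero, div_eq_mul_inv, mul_inv, mul_assoc]
    _ = circleAverage (fun z ↦ f (c / R * z)) 0 1 :=
        circleAverage_zero_one_congr_inv (f := fun z ↦ f (c / R * z))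
    _ = circleAverage f 0 (‖c‖ / R) := by
        rw [circleAverage_comp_mul, mul_one, norm_div, norm_real, norm_eq_abs,
          ← circleAverage_abs_radius (R := ‖c‖ / R), abs_div, abs_norm]

theorem circleAverage_eq_zero_of_apply_div_eq_neg [NormedSpace ℝ E] {f : ℂ → E} {c : ℂ}
    (hf : ∀ z ∈ sphere 0 √‖c‖, f (c / z) = -f z) : circleAverage f 0 √‖c‖ = 0 := by
  have : IsAddTorsionFree E := .of_isTorsionFree ℝ E
  rw [← self_eq_neg]
  calc circleAverage f 0 √‖c‖
      = circleAverage (fun z ↦ f (c / z)) 0 √‖c‖ := by rw [circleAverage_comp_div, div_sqrt]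
    _ = circleAverage (fun z ↦ (-1 : ℝ) • f z) 0 √‖c‖ := by
        refine circleAverage_congr_sphere fun z hz ↦ ?_
        rw [abs_of_nonneg (sqrt_nonneg _)] at hz
        simp only [hf z hz, neg_one_smul]
    _ = -circleAverage f 0 √‖c‖ := by rw [circleAverage_fun_smul, neg_one_smul]

theorem circleAverage_eq_of_differentiable_on_annulus [NormedSpace ℂ E] {f : ℂ → E} {c : ℂ}
    {r R : ℝ} (hr : 0 < r) (hrR : r ≤ R) (hc : ContinuousOn f (closedBall c R \ ball c r))
    (hd : ∀ z ∈ ball c R \ closedBall c r, DifferentiableAt ℂ f z) :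
    circleAverage f c R = circleAverage f c r := by
  rw [circleAverage_eq_circleIntegral hr.ne', circleAverage_eq_circleIntegral (hr.trans_le hrR).ne',
    circleIntegral_sub_center_inv_smul_eq_of_differentiable_on_annulus_off_countable
      hr hrR countable_empty hc fun z hz ↦ hd z hz.1]

theorem continuousOn_circleAverage_of_continuousOn [NormedSpace ℝ E] {X : Type*}
    [TopologicalSpace X] {f : X → ℂ → E} {s : Set X} {c : ℂ} {R : ℝ}
    (hf : ContinuousOn (uncurry f) (s ×ˢ sphere c |R|)) :
    ContinuousOn (fun x ↦ circleAverage (f x) c R) s := by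
  rw [continuousOn_iff_continuous_domRestrict]
  refine (intervalIntegral.continuous_parametric_intervalIntegral_of_continuous'
    (f := fun (x : s) θ ↦ f x (circleMap c R θ)) ?_ 0 (2 * π)).const_smul (2 * π)⁻¹
  exact hf.comp_continuous (f := fun p : s × ℝ ↦ ((p.1 : X), circleMap c R p.2)) (by fun_prop)
    fun p ↦ ⟨p.1.2, circleMap_mem_sphere' c R p.2⟩

theorem integral_zero_pi_eq_smul_circleAverage [NormedSpace ℝ E] {f : ℂ → E}
    (hf : CircleIntegrable f 0 1) (hinv : ∀ z ∈ sphere 0 1, f z⁻¹ = f z) :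
    ∫ θ in (0 : ℝ)..π, f (circleMap 0 1 θ) = π • circleAverage f 0 1 := by
  set g : ℝ → E := fun θ ↦ f (circleMap 0 1 θ)
  have hper : Periodic g (2 * π) := fun θ ↦ congrArg f (periodic_circleMap 0 1 θ)
  have heven (θ : ℝ) : g (-θ) = g θ := by
    simpa only [circleMap_zero_inv, inv_one] using
      hinv (circleMap 0 1 θ) (circleMap_mem_sphere 0 zero_le_one θ)
  have hint (a b : ℝ) : IntervalIntegrable g volume a b :=
    hper.intervalIntegrable₀ two_pi_pos.ne' hf a b
  have hreflect : ∫ θ in -π..0, g θ = ∫ θ in (0 : ℝ)..π, g θ := by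
    simpa only [heven, neg_zero] using (intervalIntegral.integral_comp_neg g (a := 0) (b := π)).symm
  have hfull : ∫ θ in (0 : ℝ)..2 * π, g θ = (2 : ℝ) • ∫ θ in (0 : ℝ)..π, g θ :=
    calc ∫ θ in (0 : ℝ)..2 * π, g θ
        = ∫ θ in -π..π, g θ := by
          simpa only [zero_add, show -π + 2 * π = π by ring] using
            hper.intervalIntegral_add_eq 0 (-π)
      _ = (∫ θ in -π..0, g θ) + ∫ θ in (0 : ℝ)..π, g θ :=
          (intervalIntegral.integral_add_adjacent_intervals (hint _ _) (hint _ _)).symm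
      _ = (2 : ℝ) • ∫ θ in (0 : ℝ)..π, g θ := by rw [hreflect, two_smul]
  rw [circleAverage_def, hfull, smul_smul, smul_smul]
  field_simp
  rw [one_smul]

theorem continuousOn_dslope_of_differentiableAt {𝕜 : Type*} [NontriviallyNormedField 𝕜]
    [NormedSpace 𝕜 E] {f : 𝕜 → E} {s : Set 𝕜} {a : 𝕜} (hf : ContinuousOn f s)
    (ha : DifferentiableAt 𝕜 f a) : ContinuousOn (dslope f a) s := by
  intro z hz
  rcases eq_or_ne z a with rfl | hne
  · exact (continuousAt_dslope_same.2 ha).continuousWithinAt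
  · exact (continuousWithinAt_dslope_of_ne hne).2 (hf z hz)

theorem circleAverage_div_one_sub {r : ℝ} (hr : |r| < 1) :
    circleAverage (fun z : ℂ ↦ z / (1 - z)) 0 r = 0 := by
  have hd : ∀ z ∈ closedBall (0 : ℂ) |r|, DifferentiableAt ℂ (fun z : ℂ ↦ z / (1 - z)) z := by
    intro z hz
    have : 1 - z ≠ 0 := sub_ne_zero.2 <| by
      rintro rfl
      exact hr.not_ge (by simpa using hz)
    fun_prop (disch := assumption)
  simpa using circleAverage_of_differentiable_on_off_countable countable_empty
    (continuousOn_of_forall_continuousAt fun z hz ↦ (hd z hz).continuousAt)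
    fun z hz ↦ hd z (ball_subset_closedBall hz.1)

theorem mul_dslope_one_add_inv {f : ℂ → ℂ} {z : ℂ} (hz₀ : z ≠ 0) (hz₁ : z ≠ 1)
    (hinv : f z⁻¹ = f z) : z * dslope f 1 z + z⁻¹ * dslope f 1 z⁻¹ = f z - f 1 := by
  rw [dslope_of_ne f hz₁, dslope_of_ne f (inv_eq_one.not.2 hz₁), slope_def_field, slope_def_field,
    hinv]
  have h₁ : z - 1 ≠ 0 := sub_ne_zero.2 hz₁
  have h₂ : 1 - z ≠ 0 := sub_ne_zero.2 hz₁.symm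
  field_simp
  ring

theorem two_mul_circleAverage_mul_dslope_one {f : ℂ → ℂ} (hf : ContinuousOn f (sphere 0 1))
    (hf₁ : DifferentiableAt ℂ f 1) (hinv : ∀ z ∈ sphere 0 1, f z⁻¹ = f z) :
    2 * circleAverage (fun z ↦ z * dslope f 1 z) 0 1 = circleAverage f 0 1 - f 1 := by
  set D : ℂ → ℂ := fun z ↦ z * dslope f 1 z
  have hD : ContinuousOn D (sphere 0 1) :=
    continuousOn_id.mul (continuousOn_dslope_of_differentiableAt hf hf₁)
  have hD_inv : ContinuousOn (fun z ↦ D z⁻¹) (sphere 0 1) :=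
    hD.comp (continuousOn_inv₀.mono fun z hz ↦ ne_of_mem_sphere hz one_ne_zero)
      fun z hz ↦ by simpa using hz
  have hoff : (fun z ↦ D z + D z⁻¹) =ᶠ[codiscreteWithin (sphere 0 |1|)] fun z ↦ f z - f 1 := by
    filter_upwards [self_mem_codiscreteWithin _,
      compl_singleton_mem_codiscreteWithin 1] with z hz hz₁
    exact mul_dslope_one_add_inv (ne_of_mem_sphere hz (by simp)) hz₁ (hinv z (by simpa using hz))
  calc 2 * circleAverage D 0 1
      = circleAverage D 0 1 + circleAverage (fun z ↦ D z⁻¹) 0 1 := by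
        rw [circleAverage_zero_one_congr_inv, two_mul]
    _ = circleAverage (fun z ↦ D z + D z⁻¹) 0 1 :=
        (circleAverage_fun_add (hD.circleIntegrable zero_le_one)
          (hD_inv.circleIntegrable zero_le_one)).symm
    _ = circleAverage (fun z ↦ f z - f 1) 0 1 :=
        circleAverage_congr_codiscreteWithin hoff one_ne_zero
    _ = circleAverage f 0 1 - f 1 := by
        rw [circleAverage_fun_sub (hf.circleIntegrable zero_le_one) (circleIntegrable_const _ _ _),
          circleAverage_const]

theorem circleAverage_mul_dslope_one {f : ℂ → ℂ} {r : ℝ} (hr₀ : 0 ≤ r) (hr₁ : r < 1)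
    (hf : ContinuousOn f (sphere 0 r)) :
    circleAverage (fun z ↦ z * dslope f 1 z) 0 r =
      -circleAverage (fun z ↦ z / (1 - z) * f z) 0 r := by
  have hne : ∀ z ∈ sphere (0 : ℂ) r, z ≠ 1 := by
    rintro _ hz rfl
    simp [hr₁.ne'] at hz
  have hker : ContinuousOn (fun z : ℂ ↦ z / (1 - z)) (sphere 0 r) :=
    continuousOn_id.div (by fun_prop) fun z hz ↦ sub_ne_zero.2 (hne z hz).symm
  calc circleAverage (fun z ↦ z * dslope f 1 z) 0 r
      = circleAverage (fun z ↦ f 1 • (z / (1 - z)) - z / (1 - z) * f z) 0 r := by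
        refine circleAverage_congr_sphere fun z hz ↦ ?_
        rw [abs_of_nonneg hr₀] at hz
        have h₁ : z - 1 ≠ 0 := sub_ne_zero.2 (hne z hz)
        have h₂ : 1 - z ≠ 0 := sub_ne_zero.2 (hne z hz).symm
        simp only [dslope_of_ne f (hne z hz), slope_def_field, smul_eq_mul]
        field_simp
        ring
    _ = -circleAverage (fun z ↦ z / (1 - z) * f z) 0 r := by
        rw [circleAverage_fun_sub ((hker.fun_const_smul _).circleIntegrable hr₀)
            ((hker.fun_mul hf).circleIntegrable hr₀), circleAverage_fun_smul,
          circleAverage_div_one_sub (by rwa [abs_of_nonneg hr₀]), smul_zero, zero_sub]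

-- A residue computation at `z = 1`: the function `z (f z - f 1) / (z - 1)` has the same average on
-- the circles of radius `1` and `r`, because its singularity at `1` is removable.
theorem circleAverage_eq_apply_one_sub {f : ℂ → ℂ} {r : ℝ} (hr₀ : 0 < r) (hr₁ : r < 1)
    (hf : ∀ z ∈ closedBall 0 1 \ ball 0 r, DifferentiableAt ℂ f z)
    (hinv : ∀ z ∈ sphere 0 1, f z⁻¹ = f z) :
    circleAverage f 0 1 = f 1 - 2 * circleAverage (fun z ↦ z / (1 - z) * f z) 0 r := by
  have hf_cont : ContinuousOn f (closedBall 0 1 \ ball 0 r) :=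
    continuousOn_of_forall_continuousAt fun z hz ↦ (hf z hz).continuousAt
  have hf_one : DifferentiableAt ℂ f 1 := hf 1 (by simp [hr₁.le])
  have hannulus : circleAverage (fun z ↦ z * dslope f 1 z) 0 1 =
      circleAverage (fun z ↦ z * dslope f 1 z) 0 r := by
    refine circleAverage_eq_of_differentiable_on_annulus hr₀ hr₁.le
      (continuousOn_id.mul (continuousOn_dslope_of_differentiableAt hf_cont hf_one)) fun z hz ↦ ?_
    have hz₁ : z ≠ 1 := by
      rintro rfl
      simp at hz
    exact differentiableAt_id.mul ((differentiableAt_dslope_of_ne hz₁).2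
      (hf z (sdiff_subset_sdiff ball_subset_closedBall ball_subset_closedBall hz)))
  have hunit := two_mul_circleAverage_mul_dslope_one
    (hf_cont.mono fun z hz ↦ ⟨sphere_subset_closedBall hz, by simp_all [hr₁.le]⟩) hf_one hinv
  rw [hannulus, circleAverage_mul_dslope_one hr₀.le hr₁
    (hf_cont.mono fun z hz ↦ ⟨by simp_all [hr₁.le], by simp_all⟩)] at hunit
  linear_combination -hunit

end CircleAverage

theorem eq_apply_zero_of_apply_mul_eq {𝕜 X : Type*} [NormedField 𝕜] [TopologicalSpace X] [T2Space X]
    {f : 𝕜 → X} {q a : 𝕜} {R : ℝ} (hq : ‖q‖ < 1) (hf : ContinuousAt f 0)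
    (hmul : ∀ x ∈ ball 0 R, f (q * x) = f x) (ha : a ∈ ball 0 R) : f a = f 0 := by
  have hmem (n : ℕ) : q ^ n * a ∈ ball 0 R := by
    rw [mem_ball_zero_iff] at ha ⊢
    rw [norm_mul, norm_pow]
    exact (mul_le_of_le_one_left (norm_nonneg a) (pow_le_one₀ (norm_nonneg q) hq.le)).trans_lt ha
  have hiter (n : ℕ) : f (q ^ n * a) = f a := by
    induction n with
    | zero => rw [pow_zero, one_mul]
    | succ n ih => rw [pow_succ', mul_assoc, hmul _ (hmem n), ih]
  have hlim : Tendsto (fun n : ℕ ↦ q ^ n * a) atTop (𝓝 0) := by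
    simpa using (tendsto_pow_atTop_nhds_zero_of_norm_lt_one hq).mul_const a
  exact tendsto_nhds_unique tendsto_const_nhds ((hf.tendsto.comp hlim).congr hiter)

section QPochhammer

variable {q : ℂ}

theorem summable_norm_neg_mul_pow (hq : ‖q‖ < 1) (x : ℂ) :
    Summable fun k : ℕ ↦ ‖-(x * q ^ k)‖ := by
  simpa only [norm_neg, norm_mul, norm_pow] using
    (summable_geometric_of_lt_one (norm_nonneg q) hq).mul_left ‖x‖

theorem multipliable_one_sub_mul_pow (hq : ‖q‖ < 1) (x : ℂ) :
    Multipliable fun k : ℕ ↦ 1 - x * q ^ k := by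
  simpa only [sub_eq_add_neg] using
    multipliable_one_add_of_summable (summable_norm_neg_mul_pow hq x)

theorem qp_eq_one_sub_mul_qp (hq : ‖q‖ < 1) (x : ℂ) : qp q x = (1 - x) * qp q (q * x) := by
  have hshift (k : ℕ) : 1 - q * x * q ^ k = 1 - x * q ^ (k + 1) := by ring
  have htail := (multipliable_one_sub_mul_pow hq (q * x)).congr hshift
  simp only [qp, hshift]
  rw [tprod_eq_zero_mul' (f := fun k : ℕ ↦ 1 - x * q ^ k) htail, pow_zero, mul_one]

theorem qp_ne_zero {x : ℂ} (hq : ‖q‖ < 1) (hx : ‖x‖ < 1) : qp q x ≠ 0 := by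
  have hfactor (k : ℕ) : 1 + -(x * q ^ k) ≠ 0 := by
    rw [← sub_eq_add_neg, sub_ne_zero]
    intro h
    have hlt : ‖x * q ^ k‖ < 1 := by
      rw [norm_mul, norm_pow]
      exact (mul_le_of_le_one_right (norm_nonneg x) (pow_le_one₀ (norm_nonneg q) hq.le)).trans_lt hx
    simp [← h] at hlt
  simpa only [qp, sub_eq_add_neg] using
    tprod_one_add_ne_zero_of_summable hfactor (summable_norm_neg_mul_pow hq x)

theorem differentiable_qp (hq : ‖q‖ < 1) : Differentiable ℂ (qp q) := by
  intro x
  have hprod : HasProdLocallyUniformlyOn (fun k z ↦ 1 + -(z * q ^ k))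
      (fun z ↦ ∏' k : ℕ, (1 + -(z * q ^ k))) (ball 0 (‖x‖ + 1)) := by
    refine Summable.hasProdLocallyUniformlyOn_nat_one_add isOpen_ball
      ((summable_geometric_of_lt_one (norm_nonneg q) hq).mul_left (‖x‖ + 1))
      (.of_forall fun k z hz ↦ ?_) fun k ↦ by fun_prop
    rw [norm_neg, norm_mul, norm_pow]
    gcongr
    exact (mem_ball_zero_iff.1 hz).le
  have hdiff : DifferentiableOn ℂ (fun z ↦ ∏' k : ℕ, (1 + -(z * q ^ k))) (ball 0 (‖x‖ + 1)) :=
    hprod.differentiableOn (.of_forall fun s ↦ by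
      simpa only [Finset.prod_fn] using DifferentiableOn.finsetProd fun k _ ↦ by fun_prop)
      isOpen_ball
  have hqp : qp q = fun z ↦ ∏' k : ℕ, (1 + -(z * q ^ k)) := by
    funext z
    simp only [qp, sub_eq_add_neg]
  rw [hqp]
  exact hdiff.differentiableAt (isOpen_ball.mem_nhds (by simp))

theorem norm_sq_lt_one (hq : ‖q‖ < 1) : ‖q ^ 2‖ < 1 := by
  rw [norm_pow]
  exact pow_lt_one₀ (norm_nonneg q) hq two_ne_zero

theorem qp_mul_qp_neg (hq : ‖q‖ < 1) (x : ℂ) : qp q x * qp q (-x) = qp (q ^ 2) (x ^ 2) := by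
  unfold qp
  rw [← (multipliable_one_sub_mul_pow hq x).tprod_mul (multipliable_one_sub_mul_pow hq (-x))]
  exact tprod_congr fun k ↦ by ring

theorem qp_sq_mul_qp_sq (hq : ‖q‖ < 1) (x : ℂ) : qp (q ^ 2) x * qp (q ^ 2) (q * x) = qp q x := by
  have heven (k : ℕ) : 1 - x * (q ^ 2) ^ k = 1 - x * q ^ (2 * k) := by ring
  have hodd (k : ℕ) : 1 - q * x * (q ^ 2) ^ k = 1 - x * q ^ (2 * k + 1) := by ring
  have hmult := multipliable_one_sub_mul_pow (norm_sq_lt_one hq)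
  simp only [qp, heven, hodd]
  exact tprod_even_mul_odd (f := fun k ↦ 1 - x * q ^ k) ((hmult x).congr heven)
    ((hmult (q * x)).congr hodd)

theorem qp_sq_self_mul_qp_sq_sq (hq : ‖q‖ < 1) : qp (q ^ 2) q * qp (q ^ 2) (q ^ 2) = qp q q := by
  simpa only [← sq] using qp_sq_mul_qp_sq hq q

end QPochhammer

/-- The weight `(q z², q / z²; q²)_∞`, a theta function of `z²`. On the unit circle `z = e^{iθ}` it
is the numerator `h(cos θ; q^{1/2}, -q^{1/2})` of the integrand. -/
noncomputable def thetaWeight (q z : ℂ) : ℂ := qp (q ^ 2) (q * z ^ 2) * qp (q ^ 2) (q / z ^ 2)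

/-- The integrand as a function of `z = e^{iθ}`, with independent parameters in the two factors of
the denominator: the case `a = b` is the integrand itself, and separating `a` from `b` allows either
of them to be shifted to `q * a` or `q * b`. -/
noncomputable def thetaKernel (q a b z : ℂ) : ℂ := thetaWeight q z / (qp q (a * z) * qp q (b / z))

section ThetaKernel

variable {q a b z : ℂ}

theorem thetaWeight_inv (q z : ℂ) : thetaWeight q z⁻¹ = thetaWeight q z := by
  simp only [thetaWeight, inv_pow, div_inv_eq_mul, ← div_eq_mul_inv, mul_comm]

theorem thetaKernel_inv (q a b z : ℂ) : thetaKernel q a b z⁻¹ = thetaKernel q b a z := by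
  simp only [thetaKernel, thetaWeight_inv, div_inv_eq_mul, ← div_eq_mul_inv, mul_comm]

theorem thetaWeight_div (hq₀ : q ≠ 0) (hq : ‖q‖ < 1) (hz : z ≠ 0) :
    thetaWeight q (q / z) = -(z ^ 2 / q) * thetaWeight q z := by
  have harg₁ : q * (q / z) ^ 2 = q ^ 2 * (q / z ^ 2) := by ring
  have harg₂ : q / (q / z) ^ 2 = z ^ 2 / q := by field_simp
  have harg₃ : q ^ 2 * (z ^ 2 / q) = q * z ^ 2 := by field_simp
  simp only [thetaWeight]
  rw [harg₁, harg₂, qp_eq_one_sub_mul_qp (norm_sq_lt_one hq) (z ^ 2 / q), harg₃,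
    qp_eq_one_sub_mul_qp (norm_sq_lt_one hq) (q / z ^ 2)]
  field_simp
  ring

theorem mul_thetaKernel_div (hq₀ : q ≠ 0) (hq : ‖q‖ < 1) (hz : z ≠ 0) :
    q / z * thetaKernel q a (q * a) (q / z) = -(z * thetaKernel q a (q * a) z) := by
  have harg₁ : a * (q / z) = q * a / z := by ring
  have harg₂ : q * a / (q / z) = a * z := by field_simp
  rw [thetaKernel, thetaKernel, thetaWeight_div hq₀ hq hz, harg₁, harg₂]
  field_simp

theorem one_sub_mul_mul_thetaKernel (hq : ‖q‖ < 1) (h : a * z ≠ 1) :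
    (1 - a * z) * thetaKernel q a b z = thetaKernel q (q * a) b z := by
  have : 1 - a * z ≠ 0 := sub_ne_zero.2 h.symm
  rw [thetaKernel, thetaKernel, qp_eq_one_sub_mul_qp hq (a * z), ← mul_assoc q, mul_assoc (1 - _)]
  field_simp

theorem one_sub_div_mul_thetaKernel (hq : ‖q‖ < 1) (h : b / z ≠ 1) :
    (1 - b / z) * thetaKernel q a b z = thetaKernel q a (q * b) z := by
  rw [← thetaKernel_inv, ← thetaKernel_inv q (q * b), div_eq_mul_inv]
  exact one_sub_mul_mul_thetaKernel hq h

theorem differentiableAt_thetaWeight (hq : ‖q‖ < 1) (hz : z ≠ 0) :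
    DifferentiableAt ℂ (thetaWeight q) z := by
  have hqp := differentiable_qp (norm_sq_lt_one hq)
  have hz₂ : z ^ 2 ≠ 0 := pow_ne_zero 2 hz
  unfold thetaWeight
  fun_prop (disch := assumption)

theorem differentiableAt_thetaKernel (hq : ‖q‖ < 1) (hz : z ≠ 0) (ha : ‖a * z‖ < 1)
    (hb : ‖b / z‖ < 1) : DifferentiableAt ℂ (thetaKernel q a b) z := by
  have hqp := differentiable_qp hq
  have hw := differentiableAt_thetaWeight hq hz
  have hden : qp q (a * z) * qp q (b / z) ≠ 0 := mul_ne_zero (qp_ne_zero hq ha) (qp_ne_zero hq hb)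
  unfold thetaKernel
  fun_prop (disch := assumption)

theorem continuousOn_uncurry_thetaKernel (hq : ‖q‖ < 1) :
    ContinuousOn (uncurry fun a z ↦ thetaKernel q a a z) (ball 0 1 ×ˢ sphere 0 1) := by
  rintro ⟨a, z⟩ ⟨ha, hz⟩
  rw [mem_ball_zero_iff] at ha
  rw [mem_sphere_zero_iff_norm] at hz
  have hqp : Continuous (qp q) := (differentiable_qp hq).continuous
  have hz₀ : z ≠ 0 := norm_ne_zero_iff.1 (hz.trans_ne one_ne_zero)
  have hw : ContinuousAt (thetaWeight q) z := (differentiableAt_thetaWeight hq hz₀).continuousAt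
  have hden : qp q (a * z) * qp q (a / z) ≠ 0 :=
    mul_ne_zero (qp_ne_zero hq (by simpa [hz] using ha)) (qp_ne_zero hq (by simpa [hz] using ha))
  refine ContinuousAt.continuousWithinAt ?_
  simp only [uncurry_def, thetaKernel]
  have hw_snd : ContinuousAt (fun p : ℂ × ℂ ↦ thetaWeight q p.2) (a, z) :=
    ContinuousAt.comp (g := thetaWeight q) hw continuousAt_snd
  fun_prop (disch := assumption)

theorem continuousOn_thetaKernel (hq : ‖q‖ < 1) (ha : ‖a‖ < 1) :
    ContinuousOn (thetaKernel q a a) (sphere 0 1) :=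
  (continuousOn_uncurry_thetaKernel hq).comp (f := fun z ↦ (a, z)) (by fun_prop)
    fun _ hz ↦ ⟨mem_ball_zero_iff.2 ha, hz⟩

theorem norm_div_lt_one_of_sqrt_norm_le (hq : ‖q‖ < 1) (hz : √‖q‖ ≤ ‖z‖) : ‖q / z‖ < 1 := by
  rcases eq_or_ne q 0 with rfl | hq₀
  · simp
  have hq_pos : 0 < ‖q‖ := norm_pos_iff.2 hq₀
  have hlt : ‖q‖ < √‖q‖ := lt_sqrt_of_sq_lt (pow_lt_self_of_lt_one₀ hq_pos hq one_lt_two)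
  rw [norm_div, div_lt_one (hq_pos.trans (hlt.trans_le hz))]
  exact hlt.trans_le hz

theorem differentiableAt_thetaKernel_of_mem_annulus {c : ℂ} (hq₀ : q ≠ 0) (hq : ‖q‖ < 1)
    (ha : ‖a‖ < 1) (hc : ‖c‖ ≤ 1) (hz : z ∈ closedBall 0 1 \ ball 0 √‖q‖) :
    DifferentiableAt ℂ (thetaKernel q a (q * c)) z := by
  obtain ⟨hz₁, hzr⟩ := hz
  rw [mem_closedBall_zero_iff] at hz₁
  rw [mem_ball_zero_iff, not_lt] at hzr
  refine differentiableAt_thetaKernel hq ?_ ?_ ?_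
  · exact norm_pos_iff.1 ((sqrt_pos.2 (norm_pos_iff.2 hq₀)).trans_le hzr)
  · rw [norm_mul]
    exact mul_lt_one_of_nonneg_of_lt_one_left (norm_nonneg a) ha hz₁
  · rw [mul_div_right_comm, norm_mul]
    exact mul_lt_one_of_nonneg_of_lt_one_left (norm_nonneg _)
      (norm_div_lt_one_of_sqrt_norm_le hq hzr) hc

theorem circleAverage_mul_thetaKernel_sqrt_norm (hq₀ : q ≠ 0) (hq : ‖q‖ < 1) (a : ℂ) :
    circleAverage (fun z ↦ z * thetaKernel q a (q * a) z) 0 √‖q‖ = 0 :=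
  circleAverage_eq_zero_of_apply_div_eq_neg (f := fun z ↦ z * thetaKernel q a (q * a) z) fun _ hz ↦
    mul_thetaKernel_div hq₀ hq (ne_of_mem_sphere hz (sqrt_pos.2 (norm_pos_iff.2 hq₀)).ne')

theorem circleAverage_mul_thetaKernel_mul_right (hq₀ : q ≠ 0) (hq : ‖q‖ < 1) (ha : ‖a‖ < 1) :
    circleAverage (fun z ↦ z * thetaKernel q a (q * a) z) 0 1 = 0 := by
  have hr : 0 < √‖q‖ := sqrt_pos.2 (norm_pos_iff.2 hq₀)
  have hd : ∀ z ∈ closedBall (0 : ℂ) 1 \ ball 0 √‖q‖,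
      DifferentiableAt ℂ (fun z ↦ z * thetaKernel q a (q * a) z) z := fun z hz ↦
    differentiableAt_id.mul (differentiableAt_thetaKernel_of_mem_annulus hq₀ hq ha ha.le hz)
  refine (circleAverage_eq_of_differentiable_on_annulus hr (sqrt_le_one.2 hq.le)
    (continuousOn_of_forall_continuousAt fun z hz ↦ (hd z hz).continuousAt) fun z hz ↦ ?_).trans
      (circleAverage_mul_thetaKernel_sqrt_norm hq₀ hq a)
  exact hd z (sdiff_subset_sdiff ball_subset_closedBall ball_subset_closedBall hz)

theorem circleAverage_mul_thetaKernel (hq₀ : q ≠ 0) (hq : ‖q‖ < 1) (ha : ‖a‖ < 1) :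
    circleAverage (fun z ↦ z * thetaKernel q a a z) 0 1 =
      a * circleAverage (thetaKernel q a a) 0 1 := by
  have hK := continuousOn_thetaKernel hq ha
  have hzK : ContinuousOn (fun z ↦ z * thetaKernel q a a z) (sphere 0 1) := continuousOn_id.mul hK
  rw [← sub_eq_zero]
  calc circleAverage (fun z ↦ z * thetaKernel q a a z) 0 1 -
        a * circleAverage (thetaKernel q a a) 0 1
      = circleAverage (fun z ↦ z * thetaKernel q a a z - a • thetaKernel q a a z) 0 1 := by
        rw [circleAverage_fun_sub (hzK.circleIntegrable zero_le_one)
            ((hK.fun_const_smul a).circleIntegrable zero_le_one), circleAverage_fun_smul,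
          smul_eq_mul]
    _ = circleAverage (fun z ↦ z * thetaKernel q a (q * a) z) 0 1 := by
        refine circleAverage_congr_sphere fun z hz ↦ ?_
        have hz₁ : ‖z‖ = 1 := by simpa using hz
        have hz₀ : z ≠ 0 := norm_ne_zero_iff.1 (hz₁.trans_ne one_ne_zero)
        have haz : a / z ≠ 1 := fun h ↦ ha.ne (by simpa [hz₁] using congrArg norm h)
        simp only [← one_sub_div_mul_thetaKernel hq haz, smul_eq_mul]
        field_simp
    _ = 0 := circleAverage_mul_thetaKernel_mul_right hq₀ hq ha

theorem circleAverage_inv_mul_thetaKernel (hq₀ : q ≠ 0) (hq : ‖q‖ < 1) (ha : ‖a‖ < 1) :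
    circleAverage (fun z ↦ z⁻¹ * thetaKernel q a a z) 0 1 =
      a * circleAverage (thetaKernel q a a) 0 1 := by
  rw [← circleAverage_mul_thetaKernel hq₀ hq ha, ← circleAverage_zero_one_congr_inv]
  simp only [inv_inv, thetaKernel_inv]

theorem circleAverage_thetaKernel_mul (hq₀ : q ≠ 0) (hq : ‖q‖ < 1) (ha : ‖a‖ < 1) :
    circleAverage (thetaKernel q (q * a) (q * a)) 0 1 =
      (1 - a ^ 2) * circleAverage (thetaKernel q a a) 0 1 := by
  have hK := continuousOn_thetaKernel hq ha
  have hzK : ContinuousOn (fun z ↦ z * thetaKernel q a a z) (sphere 0 1) := continuousOn_id.mul hK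
  have hinvK : ContinuousOn (fun z ↦ z⁻¹ * thetaKernel q a a z) (sphere 0 1) :=
    (continuousOn_inv₀.mono fun z hz ↦ ne_of_mem_sphere hz one_ne_zero).mul hK
  calc circleAverage (thetaKernel q (q * a) (q * a)) 0 1
      = circleAverage (fun z ↦ (1 + a ^ 2) • thetaKernel q a a z -
          a • (z * thetaKernel q a a z + z⁻¹ * thetaKernel q a a z)) 0 1 := by
        refine circleAverage_congr_sphere fun z hz ↦ ?_
        have hz₁ : ‖z‖ = 1 := by simpa using hz
        have hz₀ : z ≠ 0 := norm_ne_zero_iff.1 (hz₁.trans_ne one_ne_zero)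
        have haz : a * z ≠ 1 := fun h ↦ ha.ne (by simpa [hz₁] using congrArg norm h)
        have haz' : a / z ≠ 1 := fun h ↦ ha.ne (by simpa [hz₁] using congrArg norm h)
        simp only [← one_sub_mul_mul_thetaKernel hq haz, ← one_sub_div_mul_thetaKernel hq haz',
          smul_eq_mul]
        field_simp
        ring
    _ = (1 + a ^ 2) * circleAverage (thetaKernel q a a) 0 1 -
          a * (circleAverage (fun z ↦ z * thetaKernel q a a z) 0 1 +
            circleAverage (fun z ↦ z⁻¹ * thetaKernel q a a z) 0 1) := by
        rw [circleAverage_fun_sub ((hK.fun_const_smul _).circleIntegrable zero_le_one)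
            (((hzK.fun_add hinvK).fun_const_smul _).circleIntegrable zero_le_one),
          circleAverage_fun_smul, circleAverage_fun_smul,
          circleAverage_fun_add (hzK.circleIntegrable zero_le_one)
            (hinvK.circleIntegrable zero_le_one), smul_eq_mul, smul_eq_mul]
    _ = (1 - a ^ 2) * circleAverage (thetaKernel q a a) 0 1 := by
        rw [circleAverage_mul_thetaKernel hq₀ hq ha, circleAverage_inv_mul_thetaKernel hq₀ hq ha]
        ring

theorem circleAverage_thetaKernel_mul_qp_eq (hq₀ : q ≠ 0) (hq : ‖q‖ < 1) (ha : ‖a‖ < 1)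
    (hb : ‖b‖ < 1) :
    circleAverage (thetaKernel q a a) 0 1 * qp (q ^ 2) (a ^ 2) =
      circleAverage (thetaKernel q b b) 0 1 * qp (q ^ 2) (b ^ 2) := by
  set J : ℂ → ℂ := fun x ↦ circleAverage (thetaKernel q x x) 0 1 * qp (q ^ 2) (x ^ 2)
  have hJ_cont : ContinuousAt J 0 := by
    have havg : ContinuousOn (fun x ↦ circleAverage (thetaKernel q x x) 0 1) (ball 0 1) :=
      continuousOn_circleAverage_of_continuousOn
        (by simpa only [abs_one] using continuousOn_uncurry_thetaKernel hq)
    have hqp : Continuous (qp (q ^ 2)) := (differentiable_qp (norm_sq_lt_one hq)).continuous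
    exact (havg.continuousAt (ball_mem_nhds 0 one_pos)).mul (by fun_prop)
  have hJ_mul : ∀ x ∈ ball 0 1, J (q * x) = J x := by
    intro x hx
    simp only [J]
    rw [circleAverage_thetaKernel_mul hq₀ hq (mem_ball_zero_iff.1 hx),
      qp_eq_one_sub_mul_qp (norm_sq_lt_one hq) (x ^ 2), mul_pow]
    ring
  have hJ_const {x : ℂ} (hx : ‖x‖ < 1) : J x = J 0 :=
    eq_apply_zero_of_apply_mul_eq hq hJ_cont hJ_mul (mem_ball_zero_iff.2 hx)
  exact (hJ_const ha).trans (hJ_const hb).symm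

theorem circleAverage_thetaKernel_self_eq_apply_one (hq₀ : q ≠ 0) (hq : ‖q‖ < 1) :
    circleAverage (thetaKernel q q q) 0 1 = thetaKernel q q q 1 := by
  have hr₀ : 0 < √‖q‖ := sqrt_pos.2 (norm_pos_iff.2 hq₀)
  have hr₁ : √‖q‖ < 1 := (sqrt_lt' one_pos).2 (by rwa [one_pow])
  have hd : ∀ z ∈ closedBall 0 1 \ ball 0 √‖q‖, DifferentiableAt ℂ (thetaKernel q q q) z := by
    intro z hz
    simpa only [mul_one] using
      differentiableAt_thetaKernel_of_mem_annulus hq₀ hq hq norm_one.le hz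
  have hvanish : circleAverage (fun z ↦ z / (1 - z) * thetaKernel q q q z) 0 √‖q‖ = 0 := by
    refine (circleAverage_congr_sphere fun z hz ↦ ?_).trans
      (circleAverage_mul_thetaKernel_sqrt_norm hq₀ hq 1)
    have hz₁ : z ≠ 1 := by
      rintro rfl
      simp [abs_of_pos hr₀, hr₁.ne'] at hz
    have hsub : 1 - z ≠ 0 := sub_ne_zero.2 hz₁.symm
    have hshift := one_sub_mul_mul_thetaKernel (a := 1) (b := q) (z := z) hq (by rwa [one_mul])
    simp only [mul_one, one_mul] at hshift ⊢
    rw [← hshift]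
    field_simp
  rw [circleAverage_eq_apply_one_sub hr₀ hr₁ hd fun z _ ↦ thetaKernel_inv q q q z, hvanish,
    mul_zero, sub_zero]

theorem thetaKernel_self_one (hq : ‖q‖ < 1) :
    thetaKernel q q q 1 = (qp (q ^ 2) (q ^ 2) ^ 2)⁻¹ := by
  have hodd : qp (q ^ 2) q ≠ 0 := qp_ne_zero (norm_sq_lt_one hq) hq
  have heven : qp (q ^ 2) (q ^ 2) ≠ 0 := qp_ne_zero (norm_sq_lt_one hq) (norm_sq_lt_one hq)
  simp only [thetaKernel, thetaWeight, one_pow, mul_one, div_one, ← qp_sq_self_mul_qp_sq_sq hq]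
  field_simp

theorem circleAverage_thetaKernel (hq₀ : q ≠ 0) (hq : ‖q‖ < 1) (ha : ‖a‖ < 1) :
    circleAverage (thetaKernel q a a) 0 1 = (qp (q ^ 2) (q ^ 2) * qp (q ^ 2) (a ^ 2))⁻¹ := by
  have hq₂ : qp (q ^ 2) (q ^ 2) ≠ 0 := qp_ne_zero (norm_sq_lt_one hq) (norm_sq_lt_one hq)
  have ha₂ : qp (q ^ 2) (a ^ 2) ≠ 0 := qp_ne_zero (norm_sq_lt_one hq) (norm_sq_lt_one ha)
  have hconst := circleAverage_thetaKernel_mul_qp_eq hq₀ hq ha hq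
  rw [circleAverage_thetaKernel_self_eq_apply_one hq₀ hq, thetaKernel_self_one hq] at hconst
  rw [eq_div_of_mul_eq ha₂ hconst]
  field_simp

end ThetaKernel

theorem hh_eq_qp_circleMap (q l : ℂ) (θ : ℝ) :
    hh q θ l = qp q (l * circleMap 0 1 θ) * qp q (l / circleMap 0 1 θ) := by
  rw [hh, circleMap_zero, ofReal_one, one_mul, Complex.exp_neg, ← div_eq_mul_inv]

theorem hh_mul_hh_neg {q u : ℂ} (hq : ‖q‖ < 1) (hu : u ^ 2 = q) (θ : ℝ) :
    hh q θ u * hh q θ (-u) = thetaWeight q (circleMap 0 1 θ) := by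
  rw [hh_eq_qp_circleMap, hh_eq_qp_circleMap, mul_mul_mul_comm, neg_mul, neg_div,
    qp_mul_qp_neg hq, qp_mul_qp_neg hq, mul_pow, div_pow, hu, thetaWeight]

theorem integral_step_two (q u a : ℂ) (hq0 : 0 < ‖q‖) (hq : ‖q‖ < 1) (hu : u ^ 2 = q)
    (ha : ‖a‖ < 1) :
    ∫ θ in (0:ℝ)..Real.pi, (hh q θ u * hh q θ (-u)) / hh q θ a
      = (Real.pi : ℂ) * (qp q u * qp q (-u)) / (qp q q * qp q a * qp q (-a)) := by
  have hodd : qp (q ^ 2) q ≠ 0 := qp_ne_zero (norm_sq_lt_one hq) hq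
  calc ∫ θ in (0:ℝ)..Real.pi, (hh q θ u * hh q θ (-u)) / hh q θ a
      = ∫ θ in (0:ℝ)..Real.pi, thetaKernel q a a (circleMap 0 1 θ) := by
        simp only [hh_mul_hh_neg hq hu, thetaKernel, ← hh_eq_qp_circleMap]
    _ = π * circleAverage (thetaKernel q a a) 0 1 :=
        integral_zero_pi_eq_smul_circleAverage
          ((continuousOn_thetaKernel hq ha).circleIntegrable zero_le_one)
          fun z _ ↦ thetaKernel_inv q a a z
    _ = π * (qp (q ^ 2) (q ^ 2) * qp (q ^ 2) (a ^ 2))⁻¹ := by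
        rw [circleAverage_thetaKernel (norm_pos_iff.1 hq0) hq ha]
    _ = π * (qp q u * qp q (-u)) / (qp q q * qp q a * qp q (-a)) := by
        rw [qp_mul_qp_neg hq, hu, mul_assoc (qp q q), qp_mul_qp_neg hq,
          ← qp_sq_self_mul_qp_sq_sq hq]
        field_simp
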